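/- Let Γ be a finite simple graph and let G = G(Γ) be the associated right-angled Artin group. Let N be a finitely generated full normal subgroup of G. Then G/N is both abelian-by-finite and finite-by-abelian; in particular, G/N is virtually abelian. -/

import Mathlib

/-- The defining relators of a right-angled Artin group: commutators of generators
corresponding to adjacent vertices. -/
def raagRels {V : Type} (Γ : SimpleGraph V) : Set (FreeGroup V) :=
  { r | ∃ v w : V, Γ.Adj v w ∧
      r = FreeGroup.of v * FreeGroup.of w * (FreeGroup.of v)⁻¹ * (FreeGroup.of w)⁻¹ }

/-- The right-angled Artin group associated to the simple graph `Γ`. -/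
abbrev RAAG {V : Type} (Γ : SimpleGraph V) : Type := PresentedGroup (raagRels Γ)

/-- The subgroup `G(Δ)` of the RAAG generated by the vertices in the set `S`. -/
def raagVertexSubgroup {V : Type} (Γ : SimpleGraph V) (S : Set V) : Subgroup (RAAG Γ) :=
  Subgroup.closure { x | ∃ v ∈ S, x = PresentedGroup.of (rels := raagRels Γ) v }

/-- A set of vertices `S` is a join of two (nonempty) subgraphs if it can be split into
two nonempty pieces every two vertices of which (one from each piece) are adjacent. -/
def IsJoinOfTwo {V : Type} (Γ : SimpleGraph V) (S : Set V) : Prop :=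
  ∃ A B : Set V, A.Nonempty ∧ B.Nonempty ∧ Disjoint A B ∧ A ∪ B = S ∧
    ∀ a ∈ A, ∀ b ∈ B, Γ.Adj a b

/-- `P : Fin k → Set V` is a join decomposition of `Γ` into join-indecomposable pieces. -/
def IsJoinDecomposition {V : Type} (Γ : SimpleGraph V) {k : ℕ} (P : Fin k → Set V) : Prop :=
  (∀ i, (P i).Nonempty) ∧ (∀ v : V, ∃! i, v ∈ P i) ∧
    (∀ i j, i ≠ j → ∀ a ∈ P i, ∀ b ∈ P j, Γ.Adj a b) ∧
    (∀ i, ¬ IsJoinOfTwo Γ (P i))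

/-- A subgroup `N` of the RAAG is full if for a join decomposition of `Γ` into
join-indecomposable pieces `Γ_1, …, Γ_k`, `N` intersects each `G(Γ_i)` nontrivially. -/
def IsFullSubgroup {V : Type} (Γ : SimpleGraph V) (N : Subgroup (RAAG Γ)) : Prop :=
  ∀ (k : ℕ) (P : Fin k → Set V), IsJoinDecomposition Γ P →
    ∀ i, N ⊓ raagVertexSubgroup Γ (P i) ≠ ⊥

/-- A group is abelian-by-finite if it has an abelian normal subgroup of finite index. -/
def AbelianByFinite (Q : Type) [Group Q] : Prop :=
  ∃ A : Subgroup Q, A.Normal ∧ A.FiniteIndex ∧ ∀ x y : A, x * y = y * x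

/-- A group is finite-by-abelian if it has a finite normal subgroup with abelian quotient,
equivalently a finite normal subgroup containing all commutators. -/
def FiniteByAbelian (Q : Type) [Group Q] : Prop :=
  ∃ F : Subgroup Q, F.Normal ∧ Finite F ∧ ∀ x y : Q, x * y * x⁻¹ * y⁻¹ ∈ F

/-!
For a vertex `v`, the group `G` is an HNN extension with stable letter `v` over `G(lk v)`, so Fox
calculus gives a cocycle `D : G → ℤ[G ⧸ G(lk v)]` with `D v = [1]` that vanishes on the other
generators. Let `N` be a finitely generated normal subgroup. Then `D|_N` has a nonzero component
along only finitely many `N`-orbits of `G ⧸ G(lk v)`, and the set of orbits along which it fails to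
be a coboundary is invariant under the transitive action of `G`. Hence either `N` has finitely many
orbits, and `G(lk v) N` has finite index in `G`, or `D|_N` is a coboundary. In the second case every
`n ∈ N` maps some `v ^ i G(lk v)` to some `v ^ j G(lk v)`, so that `N ≤ G(st v)`.

If `N` is full, this forces `st v` to be the whole graph. Indeed, let `P` be a join factor and let
`N ∩ G(P) ≤ G(T)` with `T ⊆ P ∩ st v` minimal. Then `T ≠ ∅`, and conjugation by a vertex `w ∈ P \ T`
shows that `N ∩ G(P) ≤ G(T ∩ lk w)`, so `T ⊆ lk w` by minimality. Thus `P` would be the join of `T`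
and `P \ T` unless `T = P`.

In both cases `G(st v) N` has finite index, so the image of every generator in `G ⧸ N` has a
centralizer of finite index. Therefore the center of `G ⧸ N` has finite index, and by Schur's
theorem its commutator subgroup is finite.
-/

section Cocycle

open groupCohomology

variable {G M : Type*} [Group G] [AddCommGroup M] [DistribMulAction G M] {f : G → M}

theorem map_eq_zero_of_mem_closure_of_isCocycle₁ (hf : IsCocycle₁ f) {S : Set G}
    (hS : ∀ s ∈ S, f s = 0) {g : G} (hg : g ∈ Subgroup.closure S) : f g = 0 := by
  induction hg using Subgroup.closure_induction with
  | mem s hs => exact hS s hs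
  | one => exact map_one_of_isCocycle₁ hf
  | mul a b _ _ ha hb => rw [hf, ha, hb, smul_zero, add_zero]
  | inv a _ ha =>
    rw [← smul_eq_zero_iff_eq a, map_inv_of_isCocycle₁ hf, ha, neg_zero]

theorem map_pow_of_isCocycle₁ (hf : IsCocycle₁ f) (g : G) (k : ℕ) :
    f (g ^ k) = ∑ i ∈ Finset.range k, g ^ i • f g := by
  induction k with
  | zero => simpa using map_one_of_isCocycle₁ hf
  | succ k ih => rw [pow_succ, hf, ih, Finset.sum_range_succ, add_comm]

theorem map_eq_smul_map_conj_sub_of_isCocycle₁ (hf : IsCocycle₁ f) (g h : G) :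
    f h = g • f (g⁻¹ * h * g) - (h • f g - f g) := by
  have hconj : g • f (g⁻¹ * h * g) + f g = h • f g + f h := by
    rw [← hf, ← hf]
    group
  rw [eq_sub_of_add_eq hconj]
  abel

theorem smul_sub_sub_map_of_isCocycle₁ (hf : IsCocycle₁ f) {N : Subgroup G} [hN : N.Normal] {c : M}
    (hc : ∀ n ∈ N, n • c - c = f n) (g : G) {n : G} (hn : n ∈ N) :
    n • (g • c - c - f g) = g • c - c - f g := by
  have hconj := map_eq_smul_map_conj_sub_of_isCocycle₁ hf g n
  rw [← hc n hn, ← hc _ (hN.conj_mem' n hn g), smul_sub, smul_smul,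
    show g * (g⁻¹ * n * g) = n * g by group, mul_smul] at hconj
  rw [smul_sub, smul_sub, eq_add_of_sub_eq hconj]
  abel

end Cocycle

section PermutationModule

open groupCohomology

open scoped Pointwise

variable {G X A : Type*} [Group G] [MulAction G X] [AddCommGroup A]

attribute [local instance] Finsupp.comapSMul Finsupp.comapMulAction Finsupp.comapDistribMulAction

open Classical in
/-- The restriction of a finitely supported function to the set `O`, extended by zero. It cuts an
element of the permutation module `X →₀ A` into its components along the orbits of a subgroup. -/
noncomputable def restrictTo (O : Set X) : (X →₀ A) →+ (X →₀ A) :=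
  Finsupp.filterAddHom (· ∈ O)

theorem restrictTo_apply_of_mem {O : Set X} {x : X} (hx : x ∈ O) (a : X →₀ A) :
    restrictTo O a x = a x :=
  if_pos hx

theorem restrictTo_apply_of_notMem {O : Set X} {x : X} (hx : x ∉ O) (a : X →₀ A) :
    restrictTo O a x = 0 :=
  if_neg hx

theorem restrictTo_smul_smul (g : G) (O : Set X) (a : X →₀ A) :
    restrictTo (g • O) (g • a) = g • restrictTo O a := by
  ext x
  rw [Finsupp.comapSMul_apply]
  by_cases hx : g⁻¹ • x ∈ O
  · rw [restrictTo_apply_of_mem hx,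
      restrictTo_apply_of_mem (Set.mem_smul_set_iff_inv_smul_mem.2 hx), Finsupp.comapSMul_apply]
  · rw [restrictTo_apply_of_notMem hx,
      restrictTo_apply_of_notMem (mt Set.mem_smul_set_iff_inv_smul_mem.1 hx)]

theorem restrictTo_orbit_smul (ω : MulAction.orbitRel.Quotient G X) (g : G) (a : X →₀ A) :
    restrictTo ω.orbit (g • a) = g • restrictTo ω.orbit a := by
  induction ω using Quotient.inductionOn' with
  | h x => rw [← restrictTo_smul_smul, MulAction.orbitRel.Quotient.orbit_mk, MulAction.smul_orbit]

theorem isCocycle₁_restrictTo_orbit {f : G → X →₀ A} (hf : IsCocycle₁ f)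
    (ω : MulAction.orbitRel.Quotient G X) : IsCocycle₁ fun g ↦ restrictTo ω.orbit (f g) :=
  fun g h ↦ by
    dsimp only
    rw [hf, map_add, restrictTo_orbit_smul]

theorem sum_restrictTo_orbit {F : Finset (MulAction.orbitRel.Quotient G X)} {a : X →₀ A}
    (hF : ∀ ω ∉ F, restrictTo ω.orbit a = 0) : ∑ ω ∈ F, restrictTo ω.orbit a = a := by
  ext x
  have hx : x ∈ MulAction.orbitRel.Quotient.orbit (G := G) (Quotient.mk'' x) :=
    MulAction.orbitRel.Quotient.mem_orbit.2 rfl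
  rw [Finsupp.finsetSum_apply, Finset.sum_eq_single (Quotient.mk'' x),
    restrictTo_apply_of_mem hx]
  · refine fun ω _ hω ↦ restrictTo_apply_of_notMem (fun hxω ↦ hω ?_) a
    exact (MulAction.orbitRel.Quotient.mem_orbit.1 hxω).symm
  · intro hxF
    rw [hF _ hxF, Finsupp.zero_apply]

theorem finite_setOf_restrictTo_orbit_ne_zero [Group.FG G] {f : G → X →₀ A} (hf : IsCocycle₁ f) :
    {ω : MulAction.orbitRel.Quotient G X | ∃ g, restrictTo ω.orbit (f g) ≠ 0}.Finite := by
  classical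
  obtain ⟨S, hS⟩ := Group.FG.out (G := G)
  refine (S.biUnion fun s ↦ (f s).support.image Quotient.mk'').finite_toSet.subset ?_
  rintro (ω : MulAction.orbitRel.Quotient G X) ⟨g, hg⟩
  contrapose! hg
  refine map_eq_zero_of_mem_closure_of_isCocycle₁ (isCocycle₁_restrictTo_orbit hf ω) (S := S)
    (fun s hs ↦ Finsupp.ext fun x ↦ ?_) (hS ▸ Subgroup.mem_top g)
  by_cases hx : x ∈ ω.orbit
  · rw [restrictTo_apply_of_mem hx]
    by_contra hne
    exact hg (Finset.mem_biUnion.2 ⟨s, hs, Finset.mem_image.2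
      ⟨x, Finsupp.mem_support_iff.2 hne, MulAction.orbitRel.Quotient.mem_orbit.1 hx⟩⟩)
  · exact restrictTo_apply_of_notMem hx _

theorem isCoboundary₁_of_forall_restrictTo_orbit [Group.FG G] {f : G → X →₀ A}
    (hf : IsCocycle₁ f) (h : ∀ ω : MulAction.orbitRel.Quotient G X,
      IsCoboundary₁ fun g ↦ restrictTo ω.orbit (f g)) :
    IsCoboundary₁ f := by
  have hfin := finite_setOf_restrictTo_orbit_ne_zero hf
  choose c hc using h
  refine ⟨∑ ω ∈ hfin.toFinset, c ω, fun g ↦ ?_⟩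
  rw [Finset.smul_sum, ← Finset.sum_sub_distrib, Finset.sum_congr rfl fun ω _ ↦ hc ω g]
  refine sum_restrictTo_orbit fun ω hω ↦ ?_
  simpa using fun hne ↦ hω (hfin.mem_toFinset.2 ⟨g, hne⟩)

theorem isCoboundary₁_restrictTo_orbit_smul {N : Subgroup G} [hN : N.Normal] {f : G → X →₀ A}
    (hf : IsCocycle₁ f) (g : G) {x : X}
    (h : IsCoboundary₁ fun n : N ↦ restrictTo (MulAction.orbit N x) (f n)) :
    IsCoboundary₁ fun n : N ↦ restrictTo (MulAction.orbit N (g • x)) (f n) := by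
  obtain ⟨c, hc⟩ := h
  refine ⟨g • c - restrictTo (MulAction.orbit N (g • x)) (f g), fun n ↦ ?_⟩
  have hcg : n • g • c - g • c = g • restrictTo (MulAction.orbit N x) (f (g⁻¹ * n * g)) := by
    have hcn : (g⁻¹ * n * g) • c - c = restrictTo (MulAction.orbit N x) (f (g⁻¹ * n * g)) :=
      hc ⟨_, hN.conj_mem' n n.2 g⟩
    rw [← hcn, smul_sub, smul_smul, show g * (g⁻¹ * n * g) = n * g by group, mul_smul]
    rfl
  have hfg : restrictTo (MulAction.orbit N (g • x)) ((n : G) • f g) =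
      n • restrictTo (MulAction.orbit N (g • x)) (f g) :=
    restrictTo_orbit_smul (Quotient.mk'' (g • x)) n (f g)
  dsimp only
  rw [map_eq_smul_map_conj_sub_of_isCocycle₁ hf g n, map_sub, map_sub, hfg,
    ← MulAction.smul_orbit_eq_orbit_smul, restrictTo_smul_smul, ← hcg, smul_sub]
  abel

theorem finite_orbits_or_isCoboundary₁ [MulAction.IsPretransitive G X] {N : Subgroup G} [N.Normal]
    (hfg : N.FG) {f : G → X →₀ A} (hf : IsCocycle₁ f) :
    Finite (MulAction.orbitRel.Quotient N X) ∨ IsCoboundary₁ fun n : N ↦ f n := by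
  have : Group.FG N := (Group.fg_iff_subgroup_fg N).2 hfg
  have hfN : IsCocycle₁ fun n : N ↦ f n := fun m n ↦ hf m n
  refine or_iff_not_imp_left.2 fun hinf ↦ ?_
  rw [not_finite_iff_infinite] at hinf
  obtain ⟨ω, hω⟩ := (finite_setOf_restrictTo_orbit_ne_zero hfN).exists_notMem
  obtain ⟨x, rfl⟩ := Quotient.mk''_surjective ω
  have hx : IsCoboundary₁ fun n : N ↦ restrictTo (MulAction.orbit N x) (f n) :=
    ⟨0, fun n ↦ by simpa using (not_not.1 fun hne ↦ hω ⟨n, hne⟩).symm⟩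
  refine isCoboundary₁_of_forall_restrictTo_orbit hfN fun ω' ↦ ?_
  obtain ⟨y, rfl⟩ := Quotient.mk''_surjective ω'
  obtain ⟨g, rfl⟩ := MulAction.exists_smul_eq G x y
  exact isCoboundary₁_restrictTo_orbit_smul hf g hx

theorem finiteIndex_stabilizer_sup {N : Subgroup G} [hN : N.Normal]
    [Finite (MulAction.orbitRel.Quotient N X)] (x : X) :
    (MulAction.stabilizer G x ⊔ N).FiniteIndex := by
  set H := MulAction.stabilizer G x ⊔ N
  have hinj : Function.Injective fun q : G ⧸ H ↦
      (Quotient.mk'' (q.out • x) : MulAction.orbitRel.Quotient N X) := by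
    intro p q hpq
    obtain ⟨n, hn : (n : G) • q.out • x = p.out • x⟩ := Quotient.exact hpq
    have hstab : p.out⁻¹ * n * q.out ∈ H := Subgroup.mem_sup_left <| by
      rw [MulAction.mem_stabilizer_iff, mul_smul, mul_smul, hn, inv_smul_smul]
    have hconj : q.out⁻¹ * (n : G)⁻¹ * q.out ∈ H :=
      Subgroup.mem_sup_right (hN.conj_mem' _ (N.inv_mem n.2) _)
    rw [← p.out_eq', ← q.out_eq', QuotientGroup.eq]
    convert H.mul_mem hstab hconj using 1
    group
  have := Finite.of_injective _ hinj
  exact Subgroup.finiteIndex_of_finite_quotient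

theorem exists_abs_linearCombination_le (c : X →₀ ℤ) :
    ∃ B : ℤ, ∀ u : X → ℤ, (∀ x, |u x| ≤ 1) → |Finsupp.linearCombination ℤ u c| ≤ B := by
  refine ⟨∑ x ∈ c.support, |c x|, fun u hu ↦ ?_⟩
  rw [Finsupp.linearCombination_apply]
  refine (Finset.abs_sum_le_sum_abs _ _).trans (Finset.sum_le_sum fun x _ ↦ ?_)
  dsimp only
  rw [smul_eq_mul, abs_mul]
  exact mul_le_of_le_one_right (abs_nonneg _) (hu x)

theorem linearCombination_smul_apply (u : X → ℤ) (g : G) (c : X →₀ ℤ) :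
    Finsupp.linearCombination ℤ u (g • c) = Finsupp.linearCombination ℤ (fun x ↦ u (g • x)) c :=
  Finsupp.linearCombination_mapDomain _ _ _

/- With `c` a primitive of `f` on `N`, the element `g ^ k • c - c - f (g ^ k)` is fixed by `n`, so
it pairs to zero with `w y = u y - u (n • y)` for every `u`. If `n` moved the half-orbit
`{g ^ j • x | 0 ≤ j}` off itself, then for its indicator `u` the pairing of `w` with `f (g ^ k)`
would be `k`, while the pairings with `g ^ k • c` and `c` stay bounded. -/
theorem exists_smul_pow_smul_eq_pow_smul {N : Subgroup G} [N.Normal] {f : G → X →₀ ℤ}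
    (hf : IsCocycle₁ f) (hN : IsCoboundary₁ fun n : N ↦ f n) {g : G} {x : X}
    (hg : f g = Finsupp.single x 1) {n : G} (hn : n ∈ N) :
    ∃ i j : ℕ, n • g ^ i • x = g ^ j • x := by
  obtain ⟨c, hc⟩ := hN
  by_contra! hdisj
  let L : Set X := Set.range fun j : ℕ ↦ g ^ j • x
  let u : X → ℤ := L.indicator 1
  let w : X → ℤ := fun y ↦ u y - u (n • y)
  have hu y : u y = 0 ∨ u y = 1 := Set.indicator_eq_zero_or_self _ _ y
  have hw y : |w y| ≤ 1 := by
    rcases hu y with h | h <;> rcases hu (n • y) with h' | h' <;> simp [w, h, h']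
  have hwf (k : ℕ) : Finsupp.linearCombination ℤ w (f (g ^ k)) = k := by
    have hwg (i : ℕ) : w (g ^ i • x) = 1 := by
      have h1 : u (g ^ i • x) = 1 := Set.indicator_of_mem (s := L) ⟨i, rfl⟩ 1
      have h0 : u (n • g ^ i • x) = 0 :=
        Set.indicator_of_notMem (s := L) (fun ⟨j, hj⟩ ↦ hdisj i j hj.symm) 1
      simp only [w, h1, h0, sub_zero]
    simp [map_pow_of_isCocycle₁ hf, hg, hwg]
  have hinv (a : X →₀ ℤ) (ha : n • a = a) : Finsupp.linearCombination ℤ w a = 0 := by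
    have := linearCombination_smul_apply u n a
    simp only [Finsupp.linearCombination_apply, w, smul_sub, Finsupp.sum_sub, ha] at this ⊢
    exact sub_eq_zero.2 this
  obtain ⟨B, hB⟩ := exists_abs_linearCombination_le c
  let k := (2 * B).toNat + 1
  have hzero := hinv _
    (smul_sub_sub_map_of_isCocycle₁ hf (fun m hm ↦ hc ⟨m, hm⟩) (g ^ k) hn)
  rw [map_sub, map_sub, hwf, linearCombination_smul_apply] at hzero
  have h1 := abs_le.1 (hB w hw)
  have h2 := abs_le.1 (hB (fun y ↦ w (g ^ k • y)) fun y ↦ hw _)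
  omega

end PermutationModule

section FiniteIndexCenter

open scoped commutatorElement

theorem finite_commutatorSet_of_finiteIndex_center {Q : Type*} [Group Q]
    [(Subgroup.center Q).FiniteIndex] : Finite (commutatorSet Q) := by
  let f (p : (Q ⧸ Subgroup.center Q) × (Q ⧸ Subgroup.center Q)) : Q := ⁅p.1.out, p.2.out⁆
  refine (Set.finite_range f).subset ?_
  rintro _ ⟨a, b, rfl⟩
  obtain ⟨x, hx⟩ := QuotientGroup.mk_out_eq_mul (Subgroup.center Q) a
  obtain ⟨y, hy⟩ := QuotientGroup.mk_out_eq_mul (Subgroup.center Q) b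
  refine ⟨(a, b), ?_⟩
  have hxc := Subgroup.mem_center_iff.1 x.2
  have hyc := Subgroup.mem_center_iff.1 y.2
  simp only [f, hx, hy, commutatorElement_def, mul_inv_rev]
  calc a * x * (b * y) * ((x : Q)⁻¹ * a⁻¹) * ((y : Q)⁻¹ * b⁻¹)
      = a * (x * (b * y) * (x : Q)⁻¹) * a⁻¹ * (y : Q)⁻¹ * b⁻¹ := by group
    _ = a * b * (y * a⁻¹) * (y : Q)⁻¹ * b⁻¹ := by rw [← hxc]; group
    _ = a * b * a⁻¹ * b⁻¹ := by rw [← hyc]; group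

variable {Q : Type} [Group Q] [hQ : (Subgroup.center Q).FiniteIndex]

theorem abelianByFinite_of_finiteIndex_center : AbelianByFinite Q :=
  ⟨Subgroup.center Q, inferInstance, hQ, fun x y ↦ Subtype.ext (Subgroup.mem_center_iff.1 y.2 x)⟩

theorem finiteByAbelian_of_finiteIndex_center : FiniteByAbelian Q :=
  have := finite_commutatorSet_of_finiteIndex_center (Q := Q)
  ⟨commutator Q, inferInstance, inferInstance, fun _ _ ↦
    Subgroup.commutator_mem_commutator (Subgroup.mem_top _) (Subgroup.mem_top _)⟩

end FiniteIndexCenter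

theorem AbelianByFinite.exists_finiteIndex {Q : Type} [Group Q] (h : AbelianByFinite Q) :
    ∃ A : Subgroup Q, A.FiniteIndex ∧ ∀ x y : A, x * y = y * x :=
  let ⟨A, _, hA⟩ := h
  ⟨A, hA⟩

namespace RAAG

open groupCohomology

open scoped commutatorElement

variable {V : Type} {Γ : SimpleGraph V}

/-- The generator of the right-angled Artin group given by the vertex `v`. -/
abbrev gen (Γ : SimpleGraph V) (v : V) : RAAG Γ := PresentedGroup.of v

theorem closure_range_gen (Γ : SimpleGraph V) : Subgroup.closure (Set.range (gen Γ)) = ⊤ :=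
  PresentedGroup.closure_range_of _

theorem commute_gen {v w : V} (h : Γ.Adj v w) : Commute (gen Γ v) (gen Γ w) := by
  have hrel : ⁅gen Γ v, gen Γ w⁆ = 1 := PresentedGroup.one_of_mem ⟨v, w, h, rfl⟩
  exact commutatorElement_eq_one_iff_commute.1 hrel

section UniversalProperty

variable {H : Type*} [Group H]

/-- The universal property of the right-angled Artin group: a map on vertices sending adjacent
vertices to commuting elements extends to a homomorphism. -/
def lift (f : V → H) (hf : ∀ v w, Γ.Adj v w → Commute (f v) (f w)) : RAAG Γ →* H :=
  PresentedGroup.toGroup (f := f) <| by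
    rintro _ ⟨v, w, h, rfl⟩
    simpa [commutatorElement_def] using commutatorElement_eq_one_iff_commute.2 (hf v w h)

@[simp]
theorem lift_gen (f : V → H) (hf : ∀ v w, Γ.Adj v w → Commute (f v) (f w)) (v : V) :
    lift f hf (gen Γ v) = f v :=
  PresentedGroup.toGroup.of _

end UniversalProperty

section VertexSubgroup

theorem vertexSubgroup_eq_closure (Γ : SimpleGraph V) (S : Set V) :
    raagVertexSubgroup Γ S = Subgroup.closure (gen Γ '' S) :=
  congrArg Subgroup.closure <| Set.ext fun _ ↦ by simp [eq_comm]

theorem gen_mem_vertexSubgroup {S : Set V} {v : V} (hv : v ∈ S) :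
    gen Γ v ∈ raagVertexSubgroup Γ S :=
  Subgroup.subset_closure ⟨v, hv, rfl⟩

theorem vertexSubgroup_le_iff {S : Set V} {H : Subgroup (RAAG Γ)} :
    raagVertexSubgroup Γ S ≤ H ↔ ∀ v ∈ S, gen Γ v ∈ H := by
  rw [vertexSubgroup_eq_closure, Subgroup.closure_le, Set.image_subset_iff]
  rfl

theorem vertexSubgroup_mono {S T : Set V} (h : S ⊆ T) :
    raagVertexSubgroup Γ S ≤ raagVertexSubgroup Γ T :=
  vertexSubgroup_le_iff.2 fun _ hv ↦ gen_mem_vertexSubgroup (h hv)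

variable (Γ)

theorem vertexSubgroup_empty : raagVertexSubgroup Γ ∅ = ⊥ := by
  rw [vertexSubgroup_eq_closure, Set.image_empty, Subgroup.closure_empty]

theorem vertexSubgroup_univ : raagVertexSubgroup Γ Set.univ = ⊤ := by
  rw [vertexSubgroup_eq_closure, Set.image_univ, closure_range_gen]

open Classical in
/-- The retraction of the right-angled Artin group onto `G(S)` killing the vertices outside `S`. -/
noncomputable def retraction (S : Set V) : RAAG Γ →* RAAG Γ :=
  lift (fun v ↦ if v ∈ S then gen Γ v else 1) fun v w h ↦ by
    split_ifs <;> simp [commute_gen h]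

theorem retraction_gen_of_mem {S : Set V} {v : V} (hv : v ∈ S) :
    retraction Γ S (gen Γ v) = gen Γ v := by
  rw [retraction, lift_gen, if_pos hv]

theorem retraction_gen_of_notMem {S : Set V} {v : V} (hv : v ∉ S) :
    retraction Γ S (gen Γ v) = 1 := by
  rw [retraction, lift_gen, if_neg hv]

theorem vertexSubgroup_inf (S T : Set V) :
    raagVertexSubgroup Γ S ⊓ raagVertexSubgroup Γ T = raagVertexSubgroup Γ (S ∩ T) := by
  refine le_antisymm (fun g ⟨hS, hT⟩ ↦ ?_) <| le_inf
    (vertexSubgroup_mono Set.inter_subset_left) (vertexSubgroup_mono Set.inter_subset_right)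
  have hfix : raagVertexSubgroup Γ S ≤ (retraction Γ S).eqLocus (MonoidHom.id _) :=
    vertexSubgroup_le_iff.2 fun v hv ↦ retraction_gen_of_mem Γ hv
  have hmap : raagVertexSubgroup Γ T ≤ (raagVertexSubgroup Γ (S ∩ T)).comap (retraction Γ S) := by
    refine vertexSubgroup_le_iff.2 fun v hv ↦ ?_
    rw [Subgroup.mem_comap]
    by_cases hvS : v ∈ S
    · rw [retraction_gen_of_mem Γ hvS]
      exact gen_mem_vertexSubgroup ⟨hvS, hv⟩
    · rw [retraction_gen_of_notMem Γ hvS]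
      exact one_mem _
  have hg : retraction Γ S g = g := hfix hS
  exact hg ▸ hmap hT

/-- The subgroup generated by the link of the vertex `v`. -/
abbrev linkSubgroup (v : V) : Subgroup (RAAG Γ) := raagVertexSubgroup Γ (Γ.neighborSet v)

/-- The subgroup generated by the star of the vertex `v`. -/
abbrev starSubgroup (v : V) : Subgroup (RAAG Γ) :=
  raagVertexSubgroup Γ (insert v (Γ.neighborSet v))

theorem linkSubgroup_le_starSubgroup (v : V) : linkSubgroup Γ v ≤ starSubgroup Γ v :=
  vertexSubgroup_mono (Set.subset_insert _ _)

theorem gen_mem_starSubgroup (v : V) : gen Γ v ∈ starSubgroup Γ v :=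
  gen_mem_vertexSubgroup (Set.mem_insert _ _)

theorem starSubgroup_le_centralizer (v : V) :
    starSubgroup Γ v ≤ Subgroup.centralizer {gen Γ v} := by
  refine vertexSubgroup_le_iff.2 fun w hw ↦ Subgroup.mem_centralizer_singleton_iff.2 ?_
  rcases hw with rfl | hw
  · rfl
  · exact (commute_gen hw).symm

end VertexSubgroup

section FoxDerivative

/- Cocycles with values in `M` are the lifts of the action on `M` to an action by affine maps
`x ↦ f g + g • x`, so they can be prescribed on generators subject to the relations. -/
theorem exists_isCocycle₁_gen_eq {M : Type*} [AddCommGroup M] [DistribMulAction (RAAG Γ) M]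
    (t : V → M)
    (ht : ∀ v w, Γ.Adj v w → gen Γ v • t w + t v = gen Γ w • t v + t w) :
    ∃ f : RAAG Γ → M, IsCocycle₁ f ∧ ∀ v, f (gen Γ v) = t v := by
  let σ (v : V) : M ≃ᵃ[ℤ] M := AffineEquiv.constVAdd ℤ M (t v) *
    (DistribMulAction.toModuleAut ℤ M (gen Γ v)).toAffineEquiv
  have hσ (v : V) (x : M) : σ v x = t v + gen Γ v • x := rfl
  have hcomm (v w : V) (h : Γ.Adj v w) : Commute (σ v) (σ w) := by
    ext x
    change σ v (σ w x) = σ w (σ v x)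
    rw [hσ, hσ, hσ, hσ, smul_add, smul_add, ← mul_smul, ← mul_smul, (commute_gen h).eq,
      ← add_assoc, ← add_assoc, add_comm (t v), ht v w h, add_comm (t w)]
  obtain ⟨φ, hφ⟩ : ∃ φ : RAAG Γ →* (M ≃ᵃ[ℤ] M), ∀ v, φ (gen Γ v) = σ v :=
    ⟨lift σ hcomm, lift_gen σ hcomm⟩
  have hlinear : AffineEquiv.linearHom.comp φ = DistribMulAction.toModuleAut ℤ M :=
    PresentedGroup.ext fun v ↦ congrArg AffineEquiv.linearHom (hφ v)
  refine ⟨fun g ↦ φ g 0, fun g h ↦ ?_, fun v ↦ by simp [hφ, hσ]⟩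
  have hadd := (φ g).map_vadd 0 (φ h 0)
  have hg : (φ g).linear = DistribMulAction.toModuleAut ℤ M g := DFunLike.congr_fun hlinear g
  simpa [hg] using hadd

attribute [local instance] Finsupp.comapSMul Finsupp.comapMulAction Finsupp.comapDistribMulAction

theorem exists_foxDerivative (Γ : SimpleGraph V) (v : V) :
    ∃ D : RAAG Γ → (RAAG Γ ⧸ linkSubgroup Γ v →₀ ℤ), IsCocycle₁ D ∧
      D (gen Γ v) = Finsupp.single ((1 : RAAG Γ) : RAAG Γ ⧸ linkSubgroup Γ v) 1 ∧
      ∀ w ≠ v, D (gen Γ w) = 0 := by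
  classical
  let x₀ : RAAG Γ ⧸ linkSubgroup Γ v := ((1 : RAAG Γ) : RAAG Γ ⧸ linkSubgroup Γ v)
  have hx₀ {w : V} (h : Γ.Adj v w) : gen Γ w • x₀ = x₀ := by
    rw [← MulAction.mem_stabilizer_iff, MulAction.stabilizer_quotient]
    exact gen_mem_vertexSubgroup h
  obtain ⟨D, hD, hgen⟩ := exists_isCocycle₁_gen_eq (Γ := Γ)
    (fun w ↦ if w = v then Finsupp.single x₀ (1 : ℤ) else 0) fun u w h ↦ by
      by_cases hu : u = v
      · subst hu
        simp [h.ne', hx₀ h]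
      · by_cases hw : w = v
        · subst hw
          simp [h.ne, hx₀ h.symm]
        · simp [hu, hw]
  exact ⟨D, hD, by rw [hgen, if_pos rfl], fun w hw ↦ by rw [hgen, if_neg hw]⟩

theorem mem_vertexSubgroup_inter_neighborSet {S : Set V} {w : V} (hw : w ∉ S) {g : RAAG Γ}
    (hg : g ∈ raagVertexSubgroup Γ S)
    (hconj : (gen Γ w)⁻¹ * g * gen Γ w ∈ raagVertexSubgroup Γ S) :
    g ∈ raagVertexSubgroup Γ (S ∩ Γ.neighborSet w) := by
  obtain ⟨D, hD, hDw, hDne⟩ := exists_foxDerivative Γ w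
  have hDS : ∀ a ∈ raagVertexSubgroup Γ S, D a = 0 := fun a ha ↦ by
    refine map_eq_zero_of_mem_closure_of_isCocycle₁ hD ?_ (vertexSubgroup_eq_closure Γ S ▸ ha)
    rintro _ ⟨v, hv, rfl⟩
    exact hDne v (ne_of_mem_of_not_mem hv hw)
  have hsmul : g • D (gen Γ w) = D (gen Γ w) := by
    have hcomm : D (g * gen Γ w) = D (gen Γ w * ((gen Γ w)⁻¹ * g * gen Γ w)) := by group
    rwa [hD, hD, hDS _ hg, hDS _ hconj, smul_zero, add_zero, zero_add] at hcomm
  have hstab : g ∈ linkSubgroup Γ w := by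
    rw [hDw, Finsupp.comapSMul_single] at hsmul
    rw [← MulAction.stabilizer_quotient (linkSubgroup Γ w), MulAction.mem_stabilizer_iff]
    exact Finsupp.single_left_injective one_ne_zero hsmul
  exact vertexSubgroup_inf Γ S _ ▸ ⟨hg, hstab⟩

theorem le_starSubgroup_or_finiteIndex_sup {N : Subgroup (RAAG Γ)} [N.Normal] (hfg : N.FG)
    (v : V) : N ≤ starSubgroup Γ v ∨ (linkSubgroup Γ v ⊔ N).FiniteIndex := by
  obtain ⟨D, hD, hDv, -⟩ := exists_foxDerivative Γ v
  rcases finite_orbits_or_isCoboundary₁ hfg hD with hfin | hcob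
  · right
    simpa only [MulAction.stabilizer_quotient] using
      finiteIndex_stabilizer_sup (N := N) ((1 : RAAG Γ) : RAAG Γ ⧸ linkSubgroup Γ v)
  · refine Or.inl fun n hn ↦ ?_
    obtain ⟨i, j, hij⟩ := exists_smul_pow_smul_eq_pow_smul hD hcob hDv hn
    have hlink : (gen Γ v ^ j)⁻¹ * n * gen Γ v ^ i ∈ linkSubgroup Γ v := by
      rw [← MulAction.stabilizer_quotient (linkSubgroup Γ v), MulAction.mem_stabilizer_iff,
        mul_smul, mul_smul, hij, inv_smul_smul]
    have hv := gen_mem_starSubgroup Γ v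
    convert mul_mem (mul_mem (pow_mem hv j) (linkSubgroup_le_starSubgroup Γ v hlink))
      (inv_mem (pow_mem hv i)) using 1
    group

end FoxDerivative

section FullSubgroup

theorem inf_vertexSubgroup_eq_bot {P S : Set V} (hP : ¬ IsJoinOfTwo Γ P) (hS : S.Finite)
    (hSP : S ⊂ P) {N : Subgroup (RAAG Γ)} [hN : N.Normal]
    (hle : N ⊓ raagVertexSubgroup Γ P ≤ raagVertexSubgroup Γ S) :
    N ⊓ raagVertexSubgroup Γ P = ⊥ := by
  obtain ⟨T, ⟨hTS, hT⟩, hmin⟩ : ∃ T, Minimal (fun T ↦ T ⊆ S ∧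
      N ⊓ raagVertexSubgroup Γ P ≤ raagVertexSubgroup Γ T) T :=
    (hS.finite_subsets.subset fun _ h ↦ h.1).exists_minimal ⟨S, subset_rfl, hle⟩
  have hTP : T ⊂ P := hTS.trans_ssubset hSP
  have hadj : ∀ a ∈ T, ∀ w ∈ P \ T, Γ.Adj a w := by
    rintro a ha w ⟨hwP, hwT⟩
    have hinter : N ⊓ raagVertexSubgroup Γ P ≤ raagVertexSubgroup Γ (T ∩ Γ.neighborSet w) := by
      intro g hg
      have hw : gen Γ w ∈ raagVertexSubgroup Γ P := gen_mem_vertexSubgroup hwP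
      have hconj : (gen Γ w)⁻¹ * g * gen Γ w ∈ raagVertexSubgroup Γ P :=
        mul_mem (mul_mem (inv_mem hw) hg.2) hw
      exact mem_vertexSubgroup_inter_neighborSet hwT (hT hg) (hT ⟨hN.conj_mem' g hg.1 _, hconj⟩)
    have hsub := hmin ⟨Set.inter_subset_left.trans hTS, hinter⟩ Set.inter_subset_left
    exact ((Γ.mem_neighborSet _ _).1 (hsub ha).2).symm
  rcases T.eq_empty_or_nonempty with rfl | hne
  · rwa [vertexSubgroup_empty, le_bot_iff] at hT
  · exact (hP ⟨T, P \ T, hne, Set.nonempty_of_ssubset hTP, Set.disjoint_sdiff_right,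
      Set.union_sdiff_cancel hTP.subset, hadj⟩).elim

theorem not_isJoinOfTwo_supp (C : Γᶜ.ConnectedComponent) : ¬ IsJoinOfTwo Γ C.supp := by
  rintro ⟨A, B, ⟨a, ha⟩, ⟨b, hb⟩, hdisj, hunion, hadj⟩
  have hclosed {x y : V} (hxy : Γᶜ.Adj x y) (hx : x ∈ A) : y ∈ A := by
    have hy : y ∈ C.supp := (C.mem_supp_congr_adj hxy).1 (hunion ▸ Or.inl hx)
    rw [← hunion] at hy
    exact hy.resolve_right fun hyB ↦ ((Γ.compl_adj x y).1 hxy).2 (hadj x hx y hyB)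
  have hreach {x y : V} (hxy : Γᶜ.Reachable x y) (hx : x ∈ A) : y ∈ A := by
    obtain ⟨p⟩ := hxy
    induction p with
    | nil => exact hx
    | cons h _ ih => exact ih (hclosed h hx)
  have haC : a ∈ C.supp := hunion ▸ Or.inl ha
  have hbC : b ∈ C.supp := hunion ▸ Or.inr hb
  exact Set.disjoint_left.1 hdisj (hreach (C.reachable_of_mem_supp haC hbC) ha) hb

theorem exists_isJoinDecomposition [Finite V] (Γ : SimpleGraph V) :
    ∃ (k : ℕ) (P : Fin k → Set V), IsJoinDecomposition Γ P := by
  obtain ⟨k, ⟨e⟩⟩ := Finite.exists_equiv_fin Γᶜ.ConnectedComponent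
  refine ⟨k, fun i ↦ (e.symm i).supp, fun i ↦ (e.symm i).nonempty_supp, fun v ↦ ?_, ?_,
    fun i ↦ not_isJoinOfTwo_supp _⟩
  · refine ⟨e (Γᶜ.connectedComponentMk v), ?_, fun i hi ↦ ?_⟩
    · simp
    · rw [← e.symm_apply_eq.1 hi.symm]
  · intro i j hij a ha b hb
    by_contra hab
    have hreach : Γᶜ.Reachable a b := by
      by_cases h : a = b
      · exact h ▸ .rfl
      · exact ((Γ.compl_adj a b).2 ⟨h, hab⟩).reachable
    exact hij (e.symm.injective (ha.symm.trans (SimpleGraph.ConnectedComponent.sound hreach)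
      |>.trans hb))

theorem _root_.IsFullSubgroup.eq_univ_of_le [Finite V] {N : Subgroup (RAAG Γ)} [N.Normal]
    (hfull : IsFullSubgroup Γ N) {S : Set V} (hS : N ≤ raagVertexSubgroup Γ S) :
    S = Set.univ := by
  obtain ⟨k, P, hP⟩ := exists_isJoinDecomposition Γ
  obtain ⟨-, hcover, -, hirred⟩ := id hP
  refine Set.eq_univ_of_forall fun v ↦ ?_
  obtain ⟨i, hvi, -⟩ := hcover v
  by_contra hvS
  refine hfull k P hP i (inf_vertexSubgroup_eq_bot (hirred i) (S ∩ P i).toFinite ?_ ?_)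
  · exact ⟨Set.inter_subset_right, fun h ↦ hvS (h hvi).1⟩
  · rw [← vertexSubgroup_inf]
    exact inf_le_inf_right _ hS

end FullSubgroup

theorem finiteIndex_starSubgroup_sup [Finite V] {N : Subgroup (RAAG Γ)} [N.Normal] (hfg : N.FG)
    (hfull : IsFullSubgroup Γ N) (v : V) : (starSubgroup Γ v ⊔ N).FiniteIndex := by
  rcases le_starSubgroup_or_finiteIndex_sup hfg v with hle | hfin
  · rw [starSubgroup, hfull.eq_univ_of_le hle, vertexSubgroup_univ, top_sup_eq]
    infer_instance
  · exact Subgroup.finiteIndex_of_le (sup_le_sup_right (linkSubgroup_le_starSubgroup Γ v) N)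

theorem finiteIndex_centralizer_mk_gen [Finite V] {N : Subgroup (RAAG Γ)} [N.Normal] (hfg : N.FG)
    (hfull : IsFullSubgroup Γ N) (v : V) :
    (Subgroup.centralizer {(gen Γ v : RAAG Γ ⧸ N)}).FiniteIndex := by
  have hle : starSubgroup Γ v ⊔ N ≤
      (Subgroup.centralizer {(gen Γ v : RAAG Γ ⧸ N)}).comap (QuotientGroup.mk' N) := by
    refine sup_le (fun g hg ↦ ?_) fun n hn ↦ ?_
    · have hcomm := Subgroup.mem_centralizer_singleton_iff.1 (starSubgroup_le_centralizer Γ v hg)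
      exact Subgroup.mem_centralizer_singleton_iff.2 (congrArg (QuotientGroup.mk' N) hcomm)
    · rw [Subgroup.mem_comap, QuotientGroup.mk'_apply, (QuotientGroup.eq_one_iff n).2 hn]
      exact one_mem _
  have := finiteIndex_starSubgroup_sup hfg hfull v
  have hcomap := Subgroup.finiteIndex_of_le hle
  rwa [Subgroup.finiteIndex_iff, Subgroup.index_comap_of_surjective _
    (QuotientGroup.mk'_surjective N), ← Subgroup.finiteIndex_iff] at hcomap

theorem finiteIndex_center_quotient [Finite V] {N : Subgroup (RAAG Γ)} [N.Normal] (hfg : N.FG)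
    (hfull : IsFullSubgroup Γ N) : (Subgroup.center (RAAG Γ ⧸ N)).FiniteIndex := by
  have hgen : Subgroup.closure (QuotientGroup.mk' N '' Set.range (gen Γ)) = ⊤ := by
    rw [← MonoidHom.map_closure, closure_range_gen,
      Subgroup.map_top_of_surjective _ (QuotientGroup.mk'_surjective N)]
  rw [Subgroup.center_eq_infi' hgen]
  have := (Set.finite_range (gen Γ)).image (QuotientGroup.mk' N) |>.to_subtype
  refine Subgroup.finiteIndex_iInf ?_
  rintro ⟨_, _, ⟨v, rfl⟩, rfl⟩
  exact finiteIndex_centralizer_mk_gen hfg hfull v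

end RAAG

theorem quotient_of_RAAG_by_fg_full_normal_subgroup
    {V : Type} [Fintype V] (Γ : SimpleGraph V)
    (N : Subgroup (RAAG Γ)) [N.Normal]
    (hfg : N.FG) (hfull : IsFullSubgroup Γ N) :
    (AbelianByFinite (RAAG Γ ⧸ N) ∧ FiniteByAbelian (RAAG Γ ⧸ N)) ∧
      ∃ A : Subgroup (RAAG Γ ⧸ N), A.FiniteIndex ∧ ∀ x y : A, x * y = y * x := by
  have := RAAG.finiteIndex_center_quotient hfg hfull
  have hab := abelianByFinite_of_finiteIndex_center (Q := RAAG Γ ⧸ N)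
  exact ⟨⟨hab, finiteByAbelian_of_finiteIndex_center⟩, hab.exists_finiteIndex⟩
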